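/- Let f : D → D be an area preserving reversible homeomorphism of the closed unit disk D. Then either (i) the set of periodic points of f (points z with f^k(z) = z for some integer k ≥ 1) consists of exactly one point z, and this z lies in the open disk D̊ and satisfies f(z) = z and I(z) = z (i.e., z is an interior symmetric fixed point); or (ii) the set of interior symmetric periodic points of f (points z ∈ D̊ with f^k(z) = z and f^ℓ(z) = I(z) for some integers k, ℓ ≥ 1) is infinite. -/

import Mathlib

open MeasureTheory Set

noncomputable section

/-- The reflection `I(x,y) = (-x,y)` on the plane. -/
def refl2 : ℝ × ℝ → ℝ × ℝ := fun p => (-p.1, p.2)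

/-- The Euclidean norm `|z| = √(x² + y²)` on `ℝ²`. -/
def enorm2 (p : ℝ × ℝ) : ℝ := Real.sqrt (p.1 ^ 2 + p.2 ^ 2)

/-- The closed unit disk `D = {z : |z| ≤ 1}`. -/
def disk : Set (ℝ × ℝ) := {p | enorm2 p ≤ 1}

/-- The open unit disk `D̊ = {z : |z| < 1}`, the interior of `D`. -/
def diskInt : Set (ℝ × ℝ) := {p | enorm2 p < 1}

lemma enorm2_refl2 (p : ℝ × ℝ) : enorm2 (refl2 p) = enorm2 p := by
  simp [enorm2, refl2, neg_sq]

lemma refl2_mem_disk {p : ℝ × ℝ} (h : p ∈ disk) : refl2 p ∈ disk := by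
  simpa [disk, enorm2_refl2] using h

/-- The restriction `I_D` of the reflection to the closed disk. -/
def ID : disk → disk := fun z => ⟨refl2 z, refl2_mem_disk z.2⟩

/-!
Area preservation enters only through recurrence: every nonempty open set meets one of its iterates.

In logarithmic polar coordinates about an interior fixed point `p` of a homeomorphism `e` of a
convex set, `e * e` (squared since `e` may reverse orientation) has lifts to the universal cover of
the punctured set that commute with the deck translation. Suppose that no iterate of `e` maps an
interior point of the open ray of angle `0` at `p` back to the ray, and that `e` has a fixed point
`w ≠ p` off the ray. Choose the lift `G` of `e * e` which fixes a lift of `w` of angle in `(0, 2π)`.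
Then `G` moves the line of angle `0` strictly to one side, say upwards, while the fixed point forces
every iterate of `G` to map the points below angle `0` to points below angle `2π`. The points below
angle `0` which `G` moves above it therefore project to a wandering set, contradicting recurrence.
So `w` lies on the ray.

By reversibility, a point of the axis that some iterate maps back to the axis is periodic, and
recurrence in a half-plane yields such a point in the interior. If there are only finitely many,
take the highest one `p`. The open ray above `p` contains no interior periodic point, so no iterate
maps an interior point of it back to it; hence every periodic point other than `p` lies on the axis
above `p`. Likewise every periodic point other than the lowest one lies below that one, so there is
exactly one periodic point.
-/

open Filter Topology

section Nonwandering

variable {X : Type*} [TopologicalSpace X] {f : X → X}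

/-- A self-map is nonwandering if every nonempty open set meets one of its preimages under a
positive iterate. This is the only consequence of area preservation that the proof uses. -/
def Nonwandering (f : X → X) : Prop :=
  ∀ U, IsOpen U → U.Nonempty → ∃ n ≠ 0, (U ∩ f^[n] ⁻¹' U).Nonempty

lemma nonwandering_of_conservative [MeasurableSpace X] [OpensMeasurableSpace X] {μ : Measure X}
    [μ.IsOpenPosMeasure] (hf : Conservative f μ) : Nonwandering f := fun U hU hne => by
  obtain ⟨z, hz, n, hn, hzn⟩ :=
    hf.exists_mem_iterate_mem hU.nullMeasurableSet (hU.measure_ne_zero μ hne)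
  exact ⟨n, hn, z, hz, hzn⟩

lemma nonwandering_of_involutive (hf : f.Involutive) : Nonwandering f := fun U _ ⟨z, hz⟩ =>
  ⟨2, two_ne_zero, z, hz, show f (f z) ∈ U by rwa [hf z]⟩

namespace Nonwandering

lemma symm {e : X ≃ₜ X} (he : Nonwandering e) : Nonwandering e.symm := fun U hU hne => by
  obtain ⟨n, hn, z, hz, hzn⟩ := he U hU hne
  exact ⟨n, hn, e^[n] z, hzn, by
    rwa [mem_preimage, Function.LeftInverse.iterate e.symm_apply_apply n z]⟩

lemma exists_card_return_times (hf : Nonwandering f) (hfc : Continuous f) {U : Set X}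
    (hU : IsOpen U) (hne : U.Nonempty) (N : ℕ) :
    ∃ V ⊆ U, IsOpen V ∧ V.Nonempty ∧
      ∃ T : Finset ℕ, T.card = N ∧ ∀ t ∈ T, MapsTo f^[t] V U := by
  induction N with
  | zero => exact ⟨U, Subset.rfl, hU, hne, ∅, rfl, by simp⟩
  | succ N ih =>
    obtain ⟨V, hVU, hV, hVne, T, hT, hTU⟩ := ih
    obtain ⟨n, hn, hreturn⟩ := hf V hV hVne
    refine ⟨V ∩ f^[n] ⁻¹' V, inter_subset_left.trans hVU, hV.inter (hV.preimage (hfc.iterate n)),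
      hreturn, insert 0 (T.map (addRightEmbedding n)), ?_, ?_⟩
    · rw [Finset.card_insert_of_notMem (by simp [hn]), Finset.card_map, hT]
    · simp only [Finset.mem_insert, Finset.mem_map, addRightEmbedding_apply]
      rintro _ (rfl | ⟨t, ht, rfl⟩) z hz
      · exact hVU hz.1
      · rw [Function.iterate_add_apply]
        exact hTU t ht hz.2

lemma iterate (hf : Nonwandering f) (hfc : Continuous f) {k : ℕ} (hk : k ≠ 0) :
    Nonwandering f^[k] := fun U hU hne => by
  obtain ⟨V, -, -, ⟨z, hz⟩, T, hT, hTU⟩ := hf.exists_card_return_times hfc hU hne (k + 1)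
  obtain ⟨s, hs, t, ht, hst, hmod⟩ := Finset.exists_ne_map_eq_of_card_lt_of_maps_to
    (s := T) (t := Finset.range k) (f := (· % k)) (by simp [hT])
    (fun t _ => Finset.mem_coe.2 (Finset.mem_range.2 (Nat.mod_lt t hk.bot_lt)))
  wlog hlt : s < t generalizing s t
  · exact this t ht s hs hst.symm hmod.symm (by omega)
  obtain ⟨j, hj⟩ := (Nat.modEq_iff_dvd' hlt.le).1 hmod
  refine ⟨j, by rintro rfl; omega, f^[s] z, hTU s hs hz, ?_⟩
  rw [mem_preimage, ← Function.iterate_mul, ← hj, ← Function.iterate_add_apply,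
    Nat.sub_add_cancel hlt.le]
  exact hTU t ht hz

lemma eq_empty_of_isOpen_of_subset_preimage_diff (hf : Nonwandering f) {K W : Set X}
    (hK : MapsTo f K K) (hW : IsOpen W) (hWK : W ⊆ f ⁻¹' K \ K) : W = ∅ := by
  by_contra! hne
  obtain ⟨n, hn, z, hz, hzn⟩ := hf W hW hne
  obtain ⟨k, rfl⟩ := Nat.exists_eq_succ_of_ne_zero hn
  exact (hWK hzn).2 (hK.iterate k (hWK hz).1)

end Nonwandering

end Nonwandering

section Connected

variable {X : Type*} [TopologicalSpace X] {S : Set X} {F : X → ℝ} {c : ℝ} {x : X}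

lemma lt_of_isPreconnected_of_ne (hS : IsPreconnected S) (hF : ContinuousOn F S)
    (hne : ∀ y ∈ S, F y ≠ c) (hx : x ∈ S) (hxc : c < F x) : ∀ y ∈ S, c < F y := by
  intro y hy
  by_contra! hyc
  obtain ⟨z, hz, hzc⟩ := hS.intermediate_value hy hx hF ⟨hyc, hxc.le⟩
  exact hne z hz hzc

lemma gt_of_isPreconnected_of_ne (hS : IsPreconnected S) (hF : ContinuousOn F S)
    (hne : ∀ y ∈ S, F y ≠ c) (hx : x ∈ S) (hxc : F x < c) : ∀ y ∈ S, F y < c := by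
  simpa using lt_of_isPreconnected_of_ne (c := -c) hS hF.neg (by simpa using hne) hx (by simpa)

lemma forall_lt_or_forall_gt_of_isPreconnected (hS : IsPreconnected S) (hF : ContinuousOn F S)
    (hne : ∀ y ∈ S, F y ≠ c) : (∀ y ∈ S, c < F y) ∨ ∀ y ∈ S, F y < c := by
  rcases S.eq_empty_or_nonempty with rfl | ⟨x, hx⟩
  · simp
  · rcases (hne x hx).lt_or_gt with h | h
    · exact .inr (gt_of_isPreconnected_of_ne hS hF hne hx h)
    · exact .inl (lt_of_isPreconnected_of_ne hS hF hne hx h)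

end Connected

lemma exists_continuous_log {A : Type*} [TopologicalSpace A] [ContractibleSpace A]
    {φ : A → ℂ} (hφ : Continuous φ) (h0 : ∀ a, φ a ≠ 0) :
    ∃ h : A → ℂ, Continuous h ∧ ∀ a, Complex.exp (h a) = φ a := by
  obtain ⟨a₀, ⟨H⟩⟩ := id_nullhomotopic A
  let ψ : C(A, {z : ℂ // z ≠ 0}) := ⟨fun a => ⟨φ a, h0 a⟩, hφ.subtype_mk _⟩
  let G : C(unitInterval × A, {z : ℂ // z ≠ 0}) := ψ.comp H.symm.toContinuousMap
  let c : C(A, ℂ) := ContinuousMap.const A (Complex.log (φ a₀))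
  have hG : ∀ a, G (0, a) = (⟨Complex.exp (c a), (c a).exp_ne_zero⟩ : {z : ℂ // z ≠ 0}) := by
    intro a
    apply Subtype.ext
    simp [G, c, ψ, Complex.exp_log (h0 a₀)]
  let F := Complex.isCoveringMap_exp.liftHomotopy G c hG
  have hF : ∀ t, (⟨Complex.exp (F t), (F t).exp_ne_zero⟩ : {z : ℂ // z ≠ 0}) = G t :=
    fun t => congrFun (Complex.isCoveringMap_exp.liftHomotopy_lifts G c hG) t
  refine ⟨fun a => F (1, a), by fun_prop, fun a => ?_⟩
  have := congrArg Subtype.val (hF (1, a))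
  simpa [G, ψ] using this

section PolarCover

variable {V : Type*} [NormedAddCommGroup V] [NormedSpace ℝ V] {ι : ℂ ≃L[ℝ] V} {p : V} {C : Set V}

/-- Logarithmic polar coordinates about `p`: the real part of `u` is the logarithm of the radius
and its imaginary part is the angle, both measured in the linear chart `ι`. -/
def polarMap (ι : ℂ ≃L[ℝ] V) (p : V) (u : ℂ) : V := p + ι (Complex.exp u)

/-- The points of `ℂ` whose logarithmic polar coordinates lie in `C`. For a star-shaped
neighbourhood `C` of `p` this is the universal cover of `C ∖ {p}`. -/
def polarCover (ι : ℂ ≃L[ℝ] V) (p : V) (C : Set V) : Set ℂ := polarMap ι p ⁻¹' C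

/-- The covering projection from the polar cover onto `C ∖ {p}`. -/
def polarProj (ι : ℂ ≃L[ℝ] V) (p : V) (C : Set V) : polarCover ι p C → C :=
  fun u => ⟨polarMap ι p u, u.2⟩

lemma continuous_polarMap : Continuous (polarMap ι p) := by
  unfold polarMap
  fun_prop

lemma isOpenMap_polarMap : IsOpenMap (polarMap ι p) :=
  (Homeomorph.addLeft p).isOpenMap.comp (ι.toHomeomorph.isOpenMap.comp Complex.isOpenMap_exp)

lemma continuous_polarProj : Continuous (polarProj ι p C) :=
  continuous_polarMap.restrictPreimage

lemma isOpenMap_polarProj : IsOpenMap (polarProj ι p C) :=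
  isOpenMap_polarMap.restrictPreimage C

lemma polarMap_ne (u : ℂ) : polarMap ι p u ≠ p := by
  simp [polarMap, Complex.exp_ne_zero]

lemma polarMap_eq_iff {u : ℂ} {z : V} : polarMap ι p u = z ↔ Complex.exp u = ι.symm (z - p) := by
  rw [polarMap, ← eq_sub_iff_add_eq', ι.eq_symm_apply]

lemma exists_polarMap_eq {z : V} (hz : z ≠ p) : ∃ u, polarMap ι p u = z :=
  ⟨Complex.log (ι.symm (z - p)),
    polarMap_eq_iff.2 (Complex.exp_log (by simpa [sub_eq_zero] using hz))⟩

lemma polarMap_eq_polarMap_iff {u v : ℂ} :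
    polarMap ι p u = polarMap ι p v ↔ ∃ n : ℤ, u = v + n * (2 * Real.pi * Complex.I) := by
  rw [polarMap_eq_iff, polarMap, add_sub_cancel_left, ι.symm_apply_apply,
    Complex.exp_eq_exp_iff_exists_int]

lemma polarMap_sub_ofReal (u : ℂ) (t : ℝ) :
    polarMap ι p (u - t) = (1 - Real.exp (-t)) • p + Real.exp (-t) • polarMap ι p u := by
  have : Complex.exp (u - t) = Real.exp (-t) • Complex.exp u := by
    rw [sub_eq_neg_add, Complex.exp_add, Complex.real_smul]
    push_cast
    rfl
  simp only [polarMap, this, map_smul]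
  module

lemma sub_ofReal_mem_polarCover (hC : StarConvex ℝ p C) {u : ℂ} (hu : u ∈ polarCover ι p C)
    {t : ℝ} (ht : 0 ≤ t) : u - t ∈ polarCover ι p C := by
  rw [polarCover, mem_preimage, polarMap_sub_ofReal]
  exact hC hu (by simpa using ht) (Real.exp_nonneg _) (sub_add_cancel _ _)

lemma exists_forall_re_le_mem_polarCover (hC : C ∈ 𝓝 p) :
    ∃ r, ∀ u : ℂ, u.re ≤ r → u ∈ polarCover ι p C := by
  have hlim : Tendsto (polarMap ι p) (comap Complex.re atBot) (𝓝 p) := by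
    have := ((ι.continuous.tendsto 0).comp Complex.tendsto_exp_comap_re_atBot).const_add p
    rwa [map_zero, add_zero] at this
  obtain ⟨r, -, hr⟩ := (atBot_basis.comap Complex.re).mem_iff.1 (hlim hC)
  exact ⟨r, fun _ hu => hr hu⟩

lemma contractibleSpace_polarCover_strip (hC : StarConvex ℝ p C) (hp : C ∈ 𝓝 p) {J : Set ℝ}
    (hJ : Convex ℝ J) (hJne : J.Nonempty) :
    ContractibleSpace ↥(polarCover ι p C ∩ Complex.im ⁻¹' J) := by
  obtain ⟨r, hr⟩ := exists_forall_re_le_mem_polarCover (ι := ι) hp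
  let B : Set ℂ := {u | u.re ≤ r} ∩ Complex.im ⁻¹' J
  have : ContractibleSpace B := by
    refine Convex.contractibleSpace ((convex_halfSpace_re_le r).inter
      (hJ.linear_preimage Complex.imLm)) ?_
    obtain ⟨y, hy⟩ := hJne
    exact ⟨⟨r, y⟩, le_refl r, hy⟩
  let S := polarCover ι p C ∩ Complex.im ⁻¹' J
  let retract : C(S, B) := ⟨fun u => ⟨u - (max 0 (u.1.re - r) : ℝ), by
    have := le_max_right 0 (u.1.re - r)
    simpa using by linarith, by simpa using u.2.2⟩, by fun_prop⟩
  let incl : C(B, S) := ⟨fun u => ⟨u, hr u u.2.1, u.2.2⟩, by fun_prop⟩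
  have hnull : (incl.comp retract).Nullhomotopic := by
    simpa using ((id_nullhomotopic B).comp_right incl).comp_left retract
  refine (contractible_iff_id_nullhomotopic S).2 ?_
  obtain ⟨a, ha⟩ := hnull
  refine ⟨a, ContinuousMap.Homotopic.trans ⟨?_⟩ ha⟩
  exact
    { toFun := fun x => ⟨x.2 - (x.1 * max 0 (x.2.1.re - r) : ℝ),
        sub_ofReal_mem_polarCover hC x.2.2.1 (mul_nonneg x.1.2.1 (le_max_left _ _)),
        by simpa using x.2.2.2⟩
      continuous_toFun := by fun_prop
      map_zero_left := fun u => by simp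
      map_one_left := fun u => by simp [incl, retract] }

lemma contractibleSpace_polarCover (hC : StarConvex ℝ p C) (hp : C ∈ 𝓝 p) :
    ContractibleSpace (polarCover ι p C) := by
  have := contractibleSpace_polarCover_strip (ι := ι) hC hp convex_univ univ_nonempty
  rwa [preimage_univ, inter_univ] at this

lemma isPreconnected_polarCover_strip (hC : StarConvex ℝ p C) (hp : C ∈ 𝓝 p) {J : Set ℝ}
    (hJ : Convex ℝ J) : IsPreconnected (polarCover ι p C ∩ Complex.im ⁻¹' J) := by
  rcases J.eq_empty_or_nonempty with rfl | hJne
  · simpa using isPreconnected_empty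
  · have := contractibleSpace_polarCover_strip (ι := ι) hC hp hJ hJne
    exact isPreconnected_iff_preconnectedSpace.2 inferInstance

end PolarCover

section Lifts

variable {V : Type*} [NormedAddCommGroup V] [NormedSpace ℝ V] {ι : ℂ ≃L[ℝ] V}

/-- The generator `u ↦ u + 2πi` of the deck group of the polar cover. -/
def polarDeck (ι : ℂ ≃L[ℝ] V) (p : V) (C : Set V) : polarCover ι p C ≃ₜ polarCover ι p C :=
  (Homeomorph.addRight (2 * Real.pi * Complex.I)).subtype fun u => by
    change polarMap ι p u ∈ C ↔ polarMap ι p (u + 2 * Real.pi * Complex.I) ∈ C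
    have : polarMap ι p (u + 2 * Real.pi * Complex.I) = polarMap ι p u :=
      polarMap_eq_polarMap_iff.2 ⟨1, by rw [Int.cast_one, one_mul]⟩
    rw [this]

lemma coe_polarDeck_zpow {p : V} {C : Set V} (n : ℤ) (u : polarCover ι p C) :
    ((polarDeck ι p C ^ n) u : ℂ) = u + n * (2 * Real.pi * Complex.I) := by
  have hone : ∀ v, (polarDeck ι p C v : ℂ) = v + 2 * Real.pi * Complex.I := fun _ => rfl
  induction n with
  | zero => simp
  | succ n ih =>
    rw [add_comm (n : ℤ), zpow_one_add, Homeomorph.mul_apply, hone, ih]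
    push_cast
    ring
  | pred n ih =>
    have hinv : ∀ v, (((polarDeck ι p C)⁻¹ v : polarCover ι p C) : ℂ) =
        v - 2 * Real.pi * Complex.I := fun v => by
      rw [eq_sub_iff_add_eq, ← hone, Homeomorph.inv_apply, Homeomorph.apply_symm_apply]
    rw [sub_eq_neg_add, zpow_add, zpow_neg_one, Homeomorph.mul_apply, hinv, ih]
    push_cast
    ring

lemma im_polarDeck_zpow {p : V} {C : Set V} (n : ℤ) (u : polarCover ι p C) :
    ((polarDeck ι p C ^ n) u : ℂ).im = (u : ℂ).im + n * (2 * Real.pi) := by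
  simp [coe_polarDeck_zpow]

lemma polarProj_eq_iff {p : V} {C : Set V} {u v : polarCover ι p C} :
    polarProj ι p C u = polarProj ι p C v ↔ ∃ n : ℤ, u = (polarDeck ι p C ^ n) v := by
  simp only [Subtype.ext_iff, coe_polarDeck_zpow, ← polarMap_eq_polarMap_iff (ι := ι) (p := p)]
  rfl

lemma polarProj_polarDeck {p : V} {C : Set V} (u : polarCover ι p C) :
    polarProj ι p C (polarDeck ι p C u) = polarProj ι p C u :=
  polarProj_eq_iff.2 ⟨1, by rw [zpow_one]⟩

lemma polarProj_ne {C : Set V} {p : C} (u : polarCover ι p C) : polarProj ι p C u ≠ p :=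
  fun h => polarMap_ne (ι := ι) (p := p) (u : ℂ) (congrArg Subtype.val h)

lemma polarDeck_zpow_injective {p : V} {C : Set V} [Nonempty (polarCover ι p C)] :
    Function.Injective fun n : ℤ => polarDeck ι p C ^ n := fun m n hmn => by
  have := congrArg Complex.im (congrArg Subtype.val
    (DFunLike.congr_fun hmn (Classical.arbitrary (polarCover ι p C))))
  simpa [im_polarDeck_zpow, Real.pi_ne_zero] using this

variable {C : Set V} {p : C} {A : Type*} [TopologicalSpace A]

lemma exists_polarProj_lift [ContractibleSpace A] {k : A → C} (hk : Continuous k)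
    (hkp : ∀ a, k a ≠ p) :
    ∃ h : A → polarCover ι p C, Continuous h ∧ ∀ a, polarProj ι p C (h a) = k a := by
  obtain ⟨h, hc, hexp⟩ := exists_continuous_log (φ := fun a => ι.symm (k a - p)) (by fun_prop)
    fun a => by simpa [sub_eq_zero, Subtype.ext_iff] using hkp a
  have hlift : ∀ a, polarMap ι p (h a) = k a := fun a => polarMap_eq_iff.2 (hexp a)
  have hmem : ∀ a, h a ∈ polarCover ι p C := fun a => by simp [polarCover, hlift]
  exact ⟨fun a => ⟨h a, hmem a⟩, hc.subtype_mk hmem, fun a => Subtype.ext (hlift a)⟩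

lemma exists_zpow_polarDeck_of_polarProj_eq [ConnectedSpace A] {p : V}
    {h₁ h₂ : A → polarCover ι p C} (hc₁ : Continuous h₁) (hc₂ : Continuous h₂)
    (h : ∀ a, polarProj ι p C (h₁ a) = polarProj ι p C (h₂ a)) :
    ∃ n : ℤ, ∀ a, h₁ a = (polarDeck ι p C ^ n) (h₂ a) := by
  choose n hn using fun a => polarProj_eq_iff.1 (h a)
  have hcast : ∀ a, (n a : ℝ) = ((h₁ a : ℂ).im - (h₂ a : ℂ).im) / (2 * Real.pi) := fun a => by
    rw [hn a, im_polarDeck_zpow]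
    field_simp
    ring
  have hnc : Continuous n := by
    rw [Int.isClosedEmbedding_coe_real.continuous_iff]
    exact (by fun_prop : Continuous fun a => _).congr fun a => (hcast a).symm
  obtain ⟨a₀⟩ := ‹ConnectedSpace A›.toNonempty
  exact ⟨n a₀, fun a => PreconnectedSpace.constant inferInstance hnc (x := a) (y := a₀) ▸ hn a⟩

lemma exists_homeomorph_lift [ContractibleSpace (polarCover ι p C)] {e : C ≃ₜ C} (hep : e p = p) :
    ∃ h : polarCover ι p C ≃ₜ polarCover ι p C, Function.Semiconj (polarProj ι p C) h e := by
  have hsymm : e.symm p = p := e.symm_apply_eq.2 hep.symm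
  obtain ⟨h, hc, hh⟩ := exists_polarProj_lift (ι := ι) (p := p)
    (e.continuous.comp (continuous_polarProj (ι := ι))) fun u hu =>
      polarProj_ne u (e.injective (hu.trans hep.symm))
  obtain ⟨h', hc', hh'⟩ := exists_polarProj_lift (ι := ι) (p := p)
    (e.symm.continuous.comp (continuous_polarProj (ι := ι))) fun u hu =>
      polarProj_ne u (e.symm.injective (hu.trans hsymm.symm))
  obtain ⟨m, hm⟩ := exists_zpow_polarDeck_of_polarProj_eq (hc.comp hc') continuous_id
    fun u => by simp [hh, hh']
  obtain ⟨n, hn⟩ := exists_zpow_polarDeck_of_polarProj_eq (hc'.comp hc) continuous_id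
    fun u => by simp [hh, hh']
  let l := fun u => (polarDeck ι p C ^ (-n)) (h' u)
  have hleft : Function.LeftInverse l h := fun u => by
    have : h' (h u) = (polarDeck ι p C ^ n) u := hn u
    simp only [l, this, ← Homeomorph.mul_apply, ← zpow_add, neg_add_cancel, zpow_zero,
      Homeomorph.one_apply]
  have hright : Function.RightInverse (fun u => h' ((polarDeck ι p C ^ (-m)) u)) h := fun u => by
    have : ∀ v, h (h' v) = (polarDeck ι p C ^ m) v := hm
    simp only [this, ← Homeomorph.mul_apply, ← zpow_add, add_neg_cancel, zpow_zero,
      Homeomorph.one_apply]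
  have hl : l = fun u => h' ((polarDeck ι p C ^ (-m)) u) := hleft.eq_rightInverse hright
  exact ⟨⟨⟨h, l, hleft, hl ▸ hright⟩, hc, (polarDeck ι p C ^ (-n)).continuous.comp hc'⟩, hh⟩

lemma exists_conj_polarDeck_eq_zpow {p : V} [ConnectedSpace (polarCover ι p C)] {e : C → C}
    {h : polarCover ι p C ≃ₜ polarCover ι p C} (hh : Function.Semiconj (polarProj ι p C) h e) :
    ∃ d : ℤ, h * polarDeck ι p C * h⁻¹ = polarDeck ι p C ^ d := by
  obtain ⟨d, hd⟩ := exists_zpow_polarDeck_of_polarProj_eq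
    (h * polarDeck ι p C * h⁻¹).continuous continuous_id fun u => by
      rw [Homeomorph.mul_apply, Homeomorph.mul_apply, hh, polarProj_polarDeck, ← hh,
        ← Homeomorph.mul_apply, mul_inv_cancel, Homeomorph.one_apply, id]
  exact ⟨d, Homeomorph.ext hd⟩

lemma commute_mul_self_of_conj_zpow {G : Type*} [Group G] {h t : G}
    (ht : Function.Injective fun n : ℤ => t ^ n) {d d' : ℤ} (hd : h * t * h⁻¹ = t ^ d)
    (hd' : h⁻¹ * t * h = t ^ d') : Commute (h * h) t := by
  have hpow : ∀ n : ℤ, h * t ^ n * h⁻¹ = t ^ (d * n) := fun n => by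
    rw [← conj_zpow, hd, zpow_mul]
  have hdd : d * d' = 1 := ht <| by
    simp only [← hpow, ← hd', zpow_one]
    group
  have hsq : d * d = 1 := by
    rcases Int.isUnit_iff.1 (IsUnit.of_mul_eq_one _ hdd) with rfl | rfl <;> rfl
  rw [commute_iff_eq, ← mul_inv_eq_iff_eq_mul]
  calc h * h * t * (h * h)⁻¹ = h * (h * t * h⁻¹) * h⁻¹ := by group
    _ = t := by rw [hd, hpow, hsq, zpow_one]

lemma exists_lift_comp_self_commute [ContractibleSpace (polarCover ι p C)] {e : C ≃ₜ C}
    (hep : e p = p) : ∃ G : polarCover ι p C ≃ₜ polarCover ι p C,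
      Function.Semiconj (polarProj ι p C) G (e * e) ∧ Commute G (polarDeck ι p C) := by
  obtain ⟨h, hh⟩ := exists_homeomorph_lift (ι := ι) hep
  obtain ⟨d, hd⟩ := exists_conj_polarDeck_eq_zpow hh
  obtain ⟨d', hd'⟩ := exists_conj_polarDeck_eq_zpow (h := h⁻¹)
    (hh.inverses_right h.apply_symm_apply e.symm_apply_apply)
  rw [inv_inv] at hd'
  exact ⟨h * h, hh.comp_right hh, commute_mul_self_of_conj_zpow polarDeck_zpow_injective hd hd'⟩

lemma starConvex_diff_singleton {z y : V} (hC : Convex ℝ C) (hz : z ∈ interior C)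
    (hy : y ∉ interior C) : StarConvex ℝ z (C \ {y}) := by
  rintro x ⟨hx, hxy⟩ a b ha hb hab
  refine ⟨hC (interior_subset hz) hx ha hb hab, ?_⟩
  rcases ha.eq_or_lt with rfl | ha
  · obtain rfl : b = 1 := by linarith
    simpa using hxy
  · rintro rfl
    exact hy (hC.combo_interior_self_mem_interior hz hx ha hb hab)

lemma contractibleSpace_compl_singleton (hC : Convex ℝ C) (hne : (interior C).Nonempty) {y : C}
    (hy : (y : V) ∉ interior C) : ContractibleSpace ({y}ᶜ : Set C) := by
  obtain ⟨z, hz⟩ := hne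
  have himage : Subtype.val '' ({y}ᶜ : Set C) = C \ {(y : V)} := by
    ext x
    simp
  have : ContractibleSpace (Subtype.val '' ({y}ᶜ : Set C)) := by
    rw [himage]
    exact (starConvex_diff_singleton hC hz hy).contractibleSpace
      ⟨z, interior_subset hz, fun h => hy (h ▸ hz)⟩
  exact (Topology.IsEmbedding.subtypeVal.homeomorphImage _).contractibleSpace

-- Otherwise removing `f z` leaves a contractible set, so the angle about `z` would be
-- single-valued on `C ∖ {z}`.
lemma mem_interior_apply_of_mem_interior (ι : ℂ ≃L[ℝ] V) (hC : Convex ℝ C) (f : C ≃ₜ C) {z : C}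
    (hz : (z : V) ∈ interior C) : (f z : V) ∈ interior C := by
  by_contra hfz
  have := contractibleSpace_compl_singleton hC ⟨z, hz⟩ hfz
  have := contractibleSpace_polarCover (ι := ι) (hC.starConvex z.2) (mem_interior_iff_mem_nhds.1 hz)
  obtain ⟨h, hc, hh⟩ := exists_polarProj_lift (ι := ι) (p := z)
    (k := fun y : ({f z}ᶜ : Set C) => f.symm y) (by fun_prop)
    fun y hy => y.2 (f.symm_apply_eq.1 hy)
  let s : polarCover ι z C → ({f z}ᶜ : Set C) :=
    fun u => ⟨f (polarProj ι z C u), fun hu => polarProj_ne u (f.injective hu)⟩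
  have hs : Continuous s := (f.continuous.comp continuous_polarProj).subtype_mk _
  obtain ⟨n, hn⟩ := exists_zpow_polarDeck_of_polarProj_eq (hc.comp hs) continuous_id
    fun u => by simp [hh, s]
  let u := Classical.arbitrary (polarCover ι z C)
  have hsu : s (polarDeck ι z C u) = s u :=
    Subtype.ext (congrArg f (polarProj_polarDeck u))
  have hdeck : polarDeck ι z C u = u := (polarDeck ι z C ^ n).injective <|
    (hn (polarDeck ι z C u)).symm.trans ((congrArg h hsu).trans (hn u))
  have := im_polarDeck_zpow 1 u
  rw [zpow_one, hdeck] at this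
  simp [Real.pi_ne_zero] at this

end Lifts

section Wandering

variable {V : Type*} [NormedAddCommGroup V] [NormedSpace ℝ V] {ι : ℂ ≃L[ℝ] V} {C : Set V}

/-- The lifts of interior points of `C` whose angle lies in `J`. -/
def interiorStrip (ι : ℂ ≃L[ℝ] V) (p : V) (C : Set V) (J : Set ℝ) : Set (polarCover ι p C) :=
  {u | (polarProj ι p C u : V) ∈ interior C ∧ (u : ℂ).im ∈ J}

/-- The open ray of angle zero emanating from `p`. -/
def polarRay (ι : ℂ ≃L[ℝ] V) (p : V) : Set V := {z | ∃ t : ℝ, 0 < t ∧ z = p + t • ι 1}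

lemma polarMap_mem_polarRay_iff {p : V} {u : ℂ} :
    polarMap ι p u ∈ polarRay ι p ↔ ∃ n : ℤ, u.im = n * (2 * Real.pi) := by
  constructor
  · rintro ⟨t, ht, hu⟩
    have hlog : polarMap ι p u = polarMap ι p (Real.log t) := by
      rw [hu, polarMap, ← Complex.ofReal_exp, Real.exp_log ht, ← map_smul, Complex.real_smul,
        mul_one]
    obtain ⟨n, hn⟩ := polarMap_eq_polarMap_iff.1 hlog
    exact ⟨n, by simpa using congrArg Complex.im hn⟩
  · rintro ⟨n, hn⟩
    have hre : polarMap ι p u = polarMap ι p u.re :=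
      polarMap_eq_polarMap_iff.2 ⟨n, Complex.ext (by simp) (by simpa using hn)⟩
    refine ⟨Real.exp u.re, Real.exp_pos _, ?_⟩
    rw [hre, polarMap, ← Complex.ofReal_exp, ← map_smul, Complex.real_smul, mul_one]

lemma interiorStrip_mono {p : V} {J K : Set ℝ} (hJK : J ⊆ K) :
    interiorStrip ι p C J ⊆ interiorStrip ι p C K :=
  fun _ hu => ⟨hu.1, hJK hu.2⟩

lemma isOpen_interiorStrip {p : V} {J : Set ℝ} (hJ : IsOpen J) :
    IsOpen (interiorStrip ι p C J) :=
  (isOpen_interior.preimage (continuous_subtype_val.comp continuous_polarProj)).inter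
    (hJ.preimage (Complex.continuous_im.comp continuous_subtype_val))

lemma isPreconnected_interiorStrip {p : V} (hC : Convex ℝ C) (hp : p ∈ interior C) {J : Set ℝ}
    (hJ : Convex ℝ J) : IsPreconnected (interiorStrip ι p C J) := by
  rw [← Topology.IsInducing.subtypeVal.isPreconnected_image]
  convert isPreconnected_polarCover_strip (ι := ι) (hC.interior.starConvex hp)
    (isOpen_interior.mem_nhds hp) hJ
  exact Subtype.coe_image.trans <| ext fun u =>
    ⟨fun ⟨_, hu⟩ => hu, fun hu => ⟨interior_subset (s := C) hu.1, hu⟩⟩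

lemma dense_interior_subtype (hC : Convex ℝ C) (hne : (interior C).Nonempty) :
    Dense {z : C | (z : V) ∈ interior C} := by
  have himage : Subtype.val '' {z : C | (z : V) ∈ interior C} = interior C :=
    (Subtype.image_preimage_coe _ _).trans (inter_eq_right.2 interior_subset)
  rw [Subtype.dense_iff, himage, hC.closure_interior_eq_closure_of_nonempty_interior hne]
  exact subset_closure

lemma dense_interiorStrip_univ {p : V} (hC : Convex ℝ C) (hne : (interior C).Nonempty) :
    Dense (interiorStrip ι p C univ) := by
  simpa [interiorStrip] using
    (dense_interior_subtype hC hne).preimage (isOpenMap_polarProj (ι := ι) (p := p))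

lemma homeomorph_coe_pow {X : Type*} [TopologicalSpace X] (e : X ≃ₜ X) (n : ℕ) :
    ⇑(e ^ n) = e^[n] :=
  hom_coe_pow (fun e : X ≃ₜ X => ⇑e) rfl (fun _ _ => rfl) e n

variable {p : C} {g : C ≃ₜ C} {G : polarCover ι p C ≃ₜ polarCover ι p C}

lemma im_apply_polarDeck_zpow (hcomm : Commute G (polarDeck ι p C)) (n : ℤ)
    (u : polarCover ι p C) :
    (G ((polarDeck ι p C ^ n) u) : ℂ).im = (G u : ℂ).im + n * (2 * Real.pi) := by
  rw [← im_polarDeck_zpow, ← Homeomorph.mul_apply, (hcomm.zpow_right n).eq, Homeomorph.mul_apply]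

lemma interiorStrip_nonempty {p : V} (hp : p ∈ interior C) {J : Set ℝ} (hJ : J.Nonempty) :
    (interiorStrip ι p C J).Nonempty := by
  obtain ⟨r, hr⟩ := exists_forall_re_le_mem_polarCover (ι := ι) (isOpen_interior.mem_nhds hp)
  obtain ⟨y, hy⟩ := hJ
  exact ⟨⟨⟨r, y⟩, interior_subset (s := C) (hr ⟨r, y⟩ le_rfl)⟩, hr ⟨r, y⟩ le_rfl, hy⟩

lemma exists_zpow_polarDeck_im_lt (hcomm : Commute G (polarDeck ι p C)) (u : polarCover ι p C)
    (b c : ℝ) : ∃ n : ℤ, ((polarDeck ι p C ^ n) u : ℂ).im < b ∧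
      (G ((polarDeck ι p C ^ n) u) : ℂ).im < c := by
  obtain ⟨n, hn⟩ := exists_int_lt (min (b - (u : ℂ).im) (c - (G u : ℂ).im) / (2 * Real.pi))
  rw [lt_div_iff₀ Real.two_pi_pos, lt_min_iff] at hn
  refine ⟨n, ?_, ?_⟩
  · rw [im_polarDeck_zpow]
    linarith
  · rw [im_apply_polarDeck_zpow hcomm]
    linarith

lemma exists_lt_zpow_polarDeck_im (hcomm : Commute G (polarDeck ι p C)) (u : polarCover ι p C)
    (b c : ℝ) : ∃ n : ℤ, b < ((polarDeck ι p C ^ n) u : ℂ).im ∧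
      c < (G ((polarDeck ι p C ^ n) u) : ℂ).im := by
  obtain ⟨n, hn⟩ := exists_int_gt (max (b - (u : ℂ).im) (c - (G u : ℂ).im) / (2 * Real.pi))
  rw [div_lt_iff₀ Real.two_pi_pos, max_lt_iff] at hn
  refine ⟨n, ?_, ?_⟩
  · rw [im_polarDeck_zpow]
    linarith
  · rw [im_apply_polarDeck_zpow hcomm]
    linarith

lemma polarProj_lift_mem_interior (hC : Convex ℝ C)
    (hG : Function.Semiconj (polarProj ι p C) G g) {u : polarCover ι p C}
    (hu : (polarProj ι p C u : V) ∈ interior C) : (polarProj ι p C (G u) : V) ∈ interior C := by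
  rw [hG u]
  exact mem_interior_apply_of_mem_interior ι hC g hu

lemma mapsTo_upper_or_mapsTo_lower (hC : Convex ℝ C) (hp : (p : V) ∈ interior C)
    (hG : Function.Semiconj (polarProj ι p C) G g) (hcomm : Commute G (polarDeck ι p C)) {c : ℝ}
    (hne : ∀ u ∈ interiorStrip ι p C {0}, (G u : ℂ).im ≠ c) :
    MapsTo G (interiorStrip ι p C (Ici 0)) (interiorStrip ι p C (Ioi c)) ∨
      MapsTo G (interiorStrip ι p C (Iic 0)) (interiorStrip ι p C (Iio c)) := by
  have him : Continuous fun u : polarCover ι p C => (u : ℂ).im := by fun_prop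
  have hlevel : ∀ u, (polarProj ι p C u : V) ∈ interior C → (G u : ℂ).im = c →
      u ∈ G.symm '' interiorStrip ι p C {c} := fun u hu hc =>
    ⟨G u, ⟨polarProj_lift_mem_interior hC hG hu, hc⟩, G.symm_apply_apply u⟩
  have hlevel_ne : ∀ u ∈ G.symm '' interiorStrip ι p C {c}, (u : ℂ).im ≠ 0 := by
    rintro _ ⟨v, ⟨hv, hvc⟩, rfl⟩ h0
    refine hne (G.symm v) ⟨?_, h0⟩ (by rwa [G.apply_symm_apply])
    exact polarProj_lift_mem_interior (g := g.symm) hC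
      (hG.inverses_right G.apply_symm_apply g.symm_apply_apply) hv
  obtain ⟨u₀, hu₀⟩ := interiorStrip_nonempty (ι := ι) hp univ_nonempty
  have htranslate : ∀ n : ℤ, (polarProj ι p C ((polarDeck ι p C ^ n) u₀) : V) ∈ interior C :=
    fun n => by
      rw [polarProj_eq_iff.2 ⟨n, rfl⟩]
      exact hu₀.1
  have hpre : IsPreconnected (G.symm '' interiorStrip ι p C {c}) :=
    (isPreconnected_interiorStrip hC hp (convex_singleton c)).image _ G.symm.continuous.continuousOn
  rcases forall_lt_or_forall_gt_of_isPreconnected hpre him.continuousOn hlevel_ne with h | h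
  · obtain ⟨n, hn, hGn⟩ := exists_zpow_polarDeck_im_lt hcomm u₀ 0 c
    refine .inr fun u hu => ⟨polarProj_lift_mem_interior hC hG hu.1, ?_⟩
    exact gt_of_isPreconnected_of_ne (isPreconnected_interiorStrip hC hp (convex_Iic 0))
      (him.comp G.continuous).continuousOn
      (fun v hv hc => (h v (hlevel v hv.1 hc)).not_ge hv.2) ⟨htranslate n, hn.le⟩ hGn u hu
  · obtain ⟨n, hn, hGn⟩ := exists_lt_zpow_polarDeck_im hcomm u₀ 0 c
    refine .inl fun u hu => ⟨polarProj_lift_mem_interior hC hG hu.1, ?_⟩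
    exact lt_of_isPreconnected_of_ne (isPreconnected_interiorStrip hC hp (convex_Ici 0))
      (him.comp G.continuous).continuousOn
      (fun v hv hc => (h v (hlevel v hv.1 hc)).not_ge hv.2) ⟨htranslate n, hn.le⟩ hGn u hu

lemma exists_mem_interiorStrip_im_neg {p : V} (hp : p ∈ interior C)
    {G : polarCover ι p C → polarCover ι p C} (hGc : Continuous G)
    (hup : MapsTo G (interiorStrip ι p C (Ici 0)) (interiorStrip ι p C (Ioi 0))) :
    ∃ u ∈ interiorStrip ι p C (Iio 0), G u ∈ interiorStrip ι p C (Ioi 0) := by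
  obtain ⟨r, hr⟩ := exists_forall_re_le_mem_polarCover (ι := ι) (isOpen_interior.mem_nhds hp)
  have hmem : ∀ s : ℝ, polarMap ι p (r + s * Complex.I) ∈ interior C := fun s => hr _ (by simp)
  let γ : ℝ → polarCover ι p C := fun s => ⟨r + s * Complex.I, interior_subset (s := C) (hmem s)⟩
  have hγ : ∀ s, γ s ∈ interiorStrip ι p C {s} := fun s =>
    ⟨hmem s, show (r + s * Complex.I : ℂ).im = s by simp⟩
  have hopen : IsOpen ((G ∘ γ) ⁻¹' interiorStrip ι p C (Ioi 0)) :=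
    (isOpen_interiorStrip isOpen_Ioi).preimage (hGc.comp (by fun_prop))
  have hzero : (0 : ℝ) ∈ (G ∘ γ) ⁻¹' interiorStrip ι p C (Ioi 0) :=
    hup ⟨(hγ 0).1, (hγ 0).2.ge⟩
  obtain ⟨s, hGs, hs⟩ := ((eventually_nhdsWithin_of_eventually_nhds
    (hopen.mem_nhds hzero)).and (self_mem_nhdsWithin (s := Iio 0))).exists
  exact ⟨γ s, ⟨(hγ s).1, (hγ s).2.trans_lt hs⟩, hGs⟩

-- The points below the line `im = 0` that `G` moves above it project to a wandering set: a return
-- would move the next image up by at least one turn.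
lemma not_nonwandering_of_mapsTo_strip (hp : (p : V) ∈ interior C)
    (hG : Function.Semiconj (polarProj ι p C) G g) (hcomm : Commute G (polarDeck ι p C))
    (hup : MapsTo G (interiorStrip ι p C (Ici 0)) (interiorStrip ι p C (Ioi 0)))
    (hbound : ∀ k ≠ 0, MapsTo G^[k] (interiorStrip ι p C (Iic 0))
      (interiorStrip ι p C (Iio (2 * Real.pi)))) : ¬ Nonwandering g := by
  intro hg
  let W := interiorStrip ι p C (Iio 0) ∩ G ⁻¹' interiorStrip ι p C (Ioi 0)
  have hW : IsOpen W := (isOpen_interiorStrip isOpen_Iio).inter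
    ((isOpen_interiorStrip isOpen_Ioi).preimage G.continuous)
  have hWne : W.Nonempty := exists_mem_interiorStrip_im_neg hp G.continuous hup
  obtain ⟨m, hm, _, ⟨v, hv, rfl⟩, v', hv', hreturn⟩ :=
    hg _ (isOpenMap_polarProj W hW) (hWne.image _)
  rw [← hG.iterate_right m v, eq_comm, polarProj_eq_iff] at hreturn
  obtain ⟨j, hj⟩ := hreturn
  have hpos : 0 < (G^[m] v : ℂ).im := by
    obtain ⟨k, rfl⟩ := Nat.exists_eq_succ_of_ne_zero hm
    have hup' : MapsTo G (interiorStrip ι p C (Ioi 0)) (interiorStrip ι p C (Ioi 0)) :=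
      hup.mono_left (interiorStrip_mono Ioi_subset_Ici_self)
    exact (hup'.iterate k hv.2).2
  have hjpos : 1 ≤ (j : ℝ) := by
    rw [hj, im_polarDeck_zpow] at hpos
    have hv'neg : (v' : ℂ).im < 0 := hv'.1.2
    exact_mod_cast Int.add_one_le_of_lt (Int.cast_pos.1
      (pos_of_mul_pos_left (by linarith : 0 < (j : ℝ) * (2 * Real.pi)) Real.two_pi_pos.le))
  have hlt : (G^[m + 1] v : ℂ).im < 2 * Real.pi :=
    (hbound (m + 1) m.succ_ne_zero (interiorStrip_mono Iio_subset_Iic_self hv.1)).2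
  rw [Function.iterate_succ_apply', hj, im_apply_polarDeck_zpow hcomm] at hlt
  have hGv' : 0 < (G v' : ℂ).im := hv'.2.2
  nlinarith [Real.two_pi_pos]

lemma not_mapsTo_interiorStrip_of_fixedPt {p : V} (hC : Convex ℝ C) (hne : (interior C).Nonempty)
    {G : polarCover ι p C → polarCover ι p C} (hGc : Continuous G) {w : polarCover ι p C}
    (hw : G w = w) {b c : ℝ} (hbw : b < (w : ℂ).im) (hwc : (w : ℂ).im < c) :
    ¬ MapsTo G (interiorStrip ι p C (Ici b)) (interiorStrip ι p C (Ioi c)) := by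
  intro hmaps
  have hO : IsOpen ({u : polarCover ι p C | b < (u : ℂ).im} ∩ {u | (G u : ℂ).im < c}) :=
    (isOpen_lt (by fun_prop) (by fun_prop)).inter (isOpen_lt (by fun_prop) (by fun_prop))
  obtain ⟨u, ⟨hbu, huc⟩, hu⟩ :=
    (dense_interiorStrip_univ hC hne).inter_open_nonempty _ hO ⟨w, hbw, by simpa [hw]⟩
  have hbu' : b < (u : ℂ).im := hbu
  have hcu : c < (G u : ℂ).im := (hmaps ⟨hu.1, hbu'.le⟩).2
  exact lt_asymm huc hcu

lemma not_nonwandering_of_mapsTo_of_fixedPt (hC : Convex ℝ C) (hp : (p : V) ∈ interior C)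
    (hG : Function.Semiconj (polarProj ι p C) G g) (hcomm : Commute G (polarDeck ι p C))
    (hup : MapsTo G (interiorStrip ι p C (Ici 0)) (interiorStrip ι p C (Ioi 0)))
    (hray : ∀ k ≠ 0, ∀ z : C, (z : V) ∈ interior C → (z : V) ∈ polarRay ι p →
      (g^[k] z : V) ∉ polarRay ι p)
    {w : polarCover ι p C} (hw : (w : ℂ).im ∈ Ioo 0 (2 * Real.pi)) (hGw : G w = w) :
    ¬ Nonwandering g := by
  refine not_nonwandering_of_mapsTo_strip hp hG hcomm hup fun k hk => ?_
  have hGk : Function.Semiconj (polarProj ι p C) (G ^ k : polarCover ι p C ≃ₜ _)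
      (g ^ k : C ≃ₜ C) := by
    simpa only [homeomorph_coe_pow] using hG.iterate_right k
  rw [← homeomorph_coe_pow]
  refine (mapsTo_upper_or_mapsTo_lower hC hp hGk (hcomm.pow_left k)
    fun u hu hc => ?_).resolve_left (not_mapsTo_interiorStrip_of_fixedPt hC ⟨p, hp⟩
      (G ^ k).continuous ?_ hw.1 hw.2)
  · refine hray k hk (polarProj ι p C u) hu.1
      (polarMap_mem_polarRay_iff.2 ⟨0, by simpa using hu.2⟩) ?_
    rw [← homeomorph_coe_pow, ← hGk]
    exact polarMap_mem_polarRay_iff.2 ⟨1, by simpa using hc⟩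
  · rw [homeomorph_coe_pow, Function.iterate_fixed hGw]

lemma iterate_symm_notMem_polarRay (hC : Convex ℝ C)
    (hray : ∀ k ≠ 0, ∀ z : C, (z : V) ∈ interior C → (z : V) ∈ polarRay ι p →
      (g^[k] z : V) ∉ polarRay ι p)
    {k : ℕ} (hk : k ≠ 0) {z : C} (hz : (z : V) ∈ interior C) (hzray : (z : V) ∈ polarRay ι p) :
    (g.symm^[k] z : V) ∉ polarRay ι p := fun h => by
  have hint : (g.symm^[k] z : V) ∈ interior C := by
    rw [← homeomorph_coe_pow]
    exact mem_interior_apply_of_mem_interior ι hC _ hz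
  refine hray k hk _ hint h ?_
  rwa [Function.LeftInverse.iterate g.apply_symm_apply k z]

lemma not_nonwandering_of_lift_fixedPt (hC : Convex ℝ C) (hp : (p : V) ∈ interior C)
    (hG : Function.Semiconj (polarProj ι p C) G g) (hcomm : Commute G (polarDeck ι p C))
    (hray : ∀ k ≠ 0, ∀ z : C, (z : V) ∈ interior C → (z : V) ∈ polarRay ι p →
      (g^[k] z : V) ∉ polarRay ι p)
    {w : polarCover ι p C} (hw : (w : ℂ).im ∈ Ioo 0 (2 * Real.pi)) (hGw : G w = w) :
    ¬ Nonwandering g := by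
  have hne : ∀ u ∈ interiorStrip ι p C {0}, (G u : ℂ).im ≠ 0 := fun u hu h0 => by
    refine hray 1 one_ne_zero (polarProj ι p C u) hu.1
      (polarMap_mem_polarRay_iff.2 ⟨0, by simpa using hu.2⟩) ?_
    rw [Function.iterate_one, ← hG u]
    exact polarMap_mem_polarRay_iff.2 ⟨0, by simpa using h0⟩
  rcases mapsTo_upper_or_mapsTo_lower hC hp hG hcomm hne with hup | hdown
  · exact not_nonwandering_of_mapsTo_of_fixedPt hC hp hG hcomm hup hray hw hGw
  · have hG' : Function.Semiconj (polarProj ι p C) G.symm g.symm :=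
      hG.inverses_right G.apply_symm_apply g.symm_apply_apply
    have hup : MapsTo G.symm (interiorStrip ι p C (Ici 0)) (interiorStrip ι p C (Ioi 0)) := by
      intro u hu
      have hint := polarProj_lift_mem_interior hC hG' hu.1
      refine ⟨hint, mem_Ioi.2 ?_⟩
      by_contra! hle
      have him : (G (G.symm u) : ℂ).im < 0 := (hdown ⟨hint, hle⟩).2
      rw [G.apply_symm_apply] at him
      exact him.not_ge hu.2
    exact fun hg => not_nonwandering_of_mapsTo_of_fixedPt hC hp hG' hcomm.inv_left hup
      (fun k hk z => iterate_symm_notMem_polarRay hC hray hk) hw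
      (G.symm_apply_eq.2 hGw.symm) hg.symm

lemma exists_polarProj_eq_of_notMem_polarRay {z : C} (hz : z ≠ p) (hzray : (z : V) ∉ polarRay ι p) :
    ∃ u, polarProj ι p C u = z ∧ (u : ℂ).im ∈ Ioo 0 (2 * Real.pi) := by
  obtain ⟨v, hv⟩ := exists_polarMap_eq (ι := ι) (Subtype.coe_injective.ne hz)
  obtain ⟨n, ⟨hn0, hn2⟩, -⟩ := existsUnique_add_zsmul_mem_Ico Real.two_pi_pos v.im 0
  let u := (polarDeck ι p C ^ n) ⟨v, show polarMap ι p v ∈ C from hv ▸ z.2⟩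
  have hu : polarProj ι p C u = z :=
    (polarProj_eq_iff.2 ⟨n, rfl⟩).trans (Subtype.ext hv)
  have him : (u : ℂ).im = v.im + n • (2 * Real.pi) := by
    rw [zsmul_eq_mul, im_polarDeck_zpow]
  refine ⟨u, hu, ?_⟩
  rw [him]
  refine ⟨hn0.lt_of_ne fun h0 => hzray ?_, by simpa using hn2⟩
  rw [← hu]
  exact polarMap_mem_polarRay_iff.2 ⟨0, by rw [him, ← h0]; simp⟩

theorem mem_polarRay_of_isFixedPt (hC : Convex ℝ C) (hp : (p : V) ∈ interior C) {e : C ≃ₜ C}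
    (he : Nonwandering e) (hep : e p = p)
    (hray : ∀ k ≠ 0, ∀ z : C, (z : V) ∈ interior C → (z : V) ∈ polarRay ι p →
      (e^[k] z : V) ∉ polarRay ι p)
    {w : C} (hew : e w = w) (hwp : w ≠ p) : (w : V) ∈ polarRay ι p := by
  by_contra hwray
  have := contractibleSpace_polarCover (ι := ι) (hC.starConvex p.2) (mem_interior_iff_mem_nhds.1 hp)
  obtain ⟨u, rfl, hu⟩ := exists_polarProj_eq_of_notMem_polarRay hwp hwray
  obtain ⟨G, hG, hcomm⟩ := exists_lift_comp_self_commute (ι := ι) hep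
  have hsq : ⇑(e * e) = e^[2] := rfl
  have hfix : polarProj ι p C u = polarProj ι p C (G u) := by
    rw [hG u, Homeomorph.mul_apply, hew, hew]
  obtain ⟨n, hn⟩ := polarProj_eq_iff.1 hfix
  refine not_nonwandering_of_lift_fixedPt (g := e * e) (G := polarDeck ι p C ^ n * G) hC hp
    (fun v => ?_) (((Commute.refl _).zpow_left n).mul_left hcomm) (fun k hk z => ?_) hu hn.symm ?_
  · rw [Homeomorph.mul_apply, polarProj_eq_iff.2 ⟨n, rfl⟩, hG v]
  · rw [hsq, ← Function.iterate_mul]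
    exact hray (2 * k) (by positivity) z
  · rw [hsq]
    exact he.iterate e.continuous two_ne_zero

end Wandering

section Reversible

variable {V : Type*} [NormedAddCommGroup V] [NormedSpace ℝ V] {C : Set V}

lemma iterate_add_self_eq_of_reversible {X : Type*} {R : X → X} {f : X ≃ X}
    (hrev : Function.Semiconj R f.symm f) {z : X} (hz : R z = z) {n : ℕ}
    (hn : R (f^[n] z) = f^[n] z) : f^[n + n] z = z := by
  have := hrev.iterate_right n (f^[n] z)
  rw [Function.LeftInverse.iterate f.symm_apply_apply n z, hz, hn] at this
  rw [Function.iterate_add_apply, ← this]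

lemma isPreconnected_interior_inter_preimage (hC : Convex ℝ C) (ψ : V →L[ℝ] ℝ) {J : Set ℝ}
    (hJ : Convex ℝ J) : IsPreconnected {z : C | (z : V) ∈ interior C ∧ ψ z ∈ J} := by
  rw [← Topology.IsInducing.subtypeVal.isPreconnected_image]
  convert (hC.interior.inter (hJ.linear_preimage ψ.toLinearMap)).isPreconnected
  exact Subtype.coe_image.trans <| ext fun z =>
    ⟨fun ⟨_, hz⟩ => hz, fun hz => ⟨interior_subset hz.1, hz⟩⟩

lemma not_nonwandering_of_halfSpace (ι : ℂ ≃L[ℝ] V) (hC : Convex ℝ C) {f : C ≃ₜ C}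
    {ψ : V →L[ℝ] ℝ} {z₀ : C} (hz₀ : (z₀ : V) ∈ interior C) (hψz₀ : ψ z₀ = 0)
    (hpos : ∀ z : C, (z : V) ∈ interior C → 0 ≤ ψ z → 0 < ψ (f z)) : ¬ Nonwandering f := by
  intro hf
  let K : Set C := {z | (z : V) ∈ interior C ∧ 0 < ψ z}
  have hK : IsOpen K :=
    (isOpen_interior.preimage continuous_subtype_val).inter
      (isOpen_Ioi.preimage (ψ.continuous.comp continuous_subtype_val))
  have hKf : MapsTo f K K := fun z hz =>
    ⟨mem_interior_apply_of_mem_interior ι hC f hz.1, hpos z hz.1 hz.2.le⟩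
  have hψ : ψ ≠ 0 := fun h => by simpa [h] using hpos z₀ hz₀ hψz₀.ge
  have hnhds : ψ '' (Subtype.val '' (f ⁻¹' K)) ∈ 𝓝 0 := by
    rw [← hψz₀]
    refine (ψ.isOpenMap_of_ne_zero hψ).image_mem_nhds ?_
    rw [← map_nhds_subtype_coe_eq_nhds z₀.2 (mem_interior_iff_mem_nhds.1 hz₀)]
    exact image_mem_map ((hK.preimage f.continuous).mem_nhds
      ⟨mem_interior_apply_of_mem_interior ι hC f hz₀, hpos z₀ hz₀ hψz₀.ge⟩)
  obtain ⟨_, ⟨_, ⟨z, hz, rfl⟩, rfl⟩, hneg⟩ := ((eventually_nhdsWithin_of_eventually_nhds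
    hnhds).and (self_mem_nhdsWithin (s := Iio 0))).exists
  have hψneg : IsOpen {z : C | ψ z < 0} := isOpen_lt (by fun_prop) (by fun_prop)
  have hempty : {z : C | ψ z < 0} ∩ f ⁻¹' K = ∅ :=
    hf.eq_empty_of_isOpen_of_subset_preimage_diff hKf
      (hψneg.inter (hK.preimage f.continuous))
      fun z hz => ⟨hz.2, fun hzK => lt_asymm hz.1 hzK.2⟩
  exact hempty.subset ⟨hneg, hz⟩

variable {f R : C ≃ₜ C} {ψ : V →L[ℝ] ℝ}

lemma exists_apply_eq_zero_of_nonneg (ι : ℂ ≃L[ℝ] V) (hC : Convex ℝ C) (hf : Nonwandering f)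
    (hrev : Function.Semiconj R f.symm f) (hR : Function.Involutive R)
    (hψ : ∀ z, ψ (R z) = -ψ z) {z₀ : C} (hz₀ : (z₀ : V) ∈ interior C) (hψz₀ : ψ z₀ = 0) :
    ∃ z : C, (z : V) ∈ interior C ∧ 0 ≤ ψ z ∧ ψ (f z) = 0 := by
  by_contra! hne
  rcases forall_lt_or_forall_gt_of_isPreconnected
    (isPreconnected_interior_inter_preimage hC ψ (convex_Ici 0))
    (F := fun z => ψ (f z)) (by fun_prop) (fun z hz => hne z hz.1 hz.2) with h | h
  · exact not_nonwandering_of_halfSpace ι hC hz₀ hψz₀ (fun z hz h0 => h z ⟨hz, h0⟩) hf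
  · have hinv : Function.Involutive (R.trans f) := fun z => by
      simp only [Homeomorph.trans_apply]
      rw [← hrev, f.symm_apply_apply, hR]
    refine not_nonwandering_of_halfSpace ι hC (ψ := -ψ) hz₀ (by simpa) (fun z hz h0 => ?_)
      (nonwandering_of_involutive hinv)
    have hRz : 0 ≤ ψ (R z) := by simpa [hψ] using h0
    simpa using h (R z) ⟨mem_interior_apply_of_mem_interior ι hC R hz, hRz⟩

lemma exists_mem_interior_apply_eq_zero (ι : ℂ ≃L[ℝ] V) (hC : Convex ℝ C)
    (hne : (interior C).Nonempty) (hψ : ∀ z, ψ (R z) = -ψ z) :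
    ∃ z : C, (z : V) ∈ interior C ∧ ψ z = 0 := by
  obtain ⟨z, hz⟩ := hne
  have hRz := mem_interior_apply_of_mem_interior ι hC R (z := ⟨z, interior_subset hz⟩) hz
  have hmid := hC.interior.midpoint_mem hz hRz
  exact ⟨⟨_, interior_subset hmid⟩, hmid, by simp [midpoint_eq_smul_add, hψ]⟩

theorem exists_interior_axis_apply_axis (ι : ℂ ≃L[ℝ] V) (hC : Convex ℝ C)
    (hne : (interior C).Nonempty) (hf : Nonwandering f)
    (hrev : Function.Semiconj R f.symm f) (hR : Function.Involutive R)
    (hψ : ∀ z, ψ (R z) = -ψ z) :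
    ∃ z : C, (z : V) ∈ interior C ∧ ψ z = 0 ∧ ψ (f z) = 0 := by
  obtain ⟨z₀, hz₀, hψz₀⟩ := exists_mem_interior_apply_eq_zero ι hC hne hψ
  by_contra! haxis
  let A : Set C := {z | (z : V) ∈ interior C ∧ ψ z ∈ ({0} : Set ℝ)}
  have hpre : IsPreconnected (f.symm '' A) :=
    (isPreconnected_interior_inter_preimage hC ψ (convex_singleton 0)).image _
      f.symm.continuous.continuousOn
  have hmem : ∀ z : C, (z : V) ∈ interior C → ψ (f z) = 0 → z ∈ f.symm '' A := fun z hz h0 =>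
    ⟨f z, ⟨mem_interior_apply_of_mem_interior ι hC f hz, h0⟩, f.symm_apply_apply z⟩
  have hne_zero : ∀ z ∈ f.symm '' A, ψ z ≠ 0 := by
    rintro _ ⟨z, ⟨hz, hz0⟩, rfl⟩ h0
    refine haxis _ (mem_interior_apply_of_mem_interior ι hC f.symm hz) h0 ?_
    rwa [f.apply_symm_apply]
  rcases forall_lt_or_forall_gt_of_isPreconnected hpre
    (F := fun z : C => ψ z) (by fun_prop) hne_zero with h | h
  · obtain ⟨z, hz, hz0, hfz⟩ := exists_apply_eq_zero_of_nonneg (ψ := -ψ) ι hC hf hrev hR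
      (by simp [hψ]) hz₀ (by simpa)
    exact (h z (hmem z hz (by simpa using hfz))).not_ge (by simpa using hz0)
  · obtain ⟨z, hz, hz0, hfz⟩ := exists_apply_eq_zero_of_nonneg ι hC hf hrev hR hψ hz₀ hψz₀
    exact (h z (hmem z hz hfz)).not_ge hz0

lemma mem_polarRay_of_mem_periodicPts {ι : ℂ ≃L[ℝ] V} {p w : C} (hC : Convex ℝ C)
    (hp : (p : V) ∈ interior C) (hf : Nonwandering f) (hrev : Function.Semiconj R f.symm f)
    (hfix : ∀ z : C, (z : V) ∈ polarRay ι p → R z = z)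
    (hray : ∀ z : C, (z : V) ∈ interior C → (z : V) ∈ polarRay ι p → z ∉ Function.periodicPts f)
    (hpf : p ∈ Function.periodicPts f) (hwf : w ∈ Function.periodicPts f) (hwp : w ≠ p) :
    (w : V) ∈ polarRay ι p := by
  obtain ⟨m, hm, hmp⟩ := hpf
  obtain ⟨n, hn, hnw⟩ := hwf
  have hmn : m * n ≠ 0 := (Nat.mul_pos hm hn).ne'
  have hcoe := homeomorph_coe_pow f (m * n)
  refine mem_polarRay_of_isFixedPt (e := f ^ (m * n)) hC hp
    (hcoe ▸ hf.iterate f.continuous hmn) (hcoe ▸ hmp.mul_const n) (fun k hk z hz hzray hkz => ?_)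
    (hcoe ▸ hnw.const_mul m) hwp
  rw [hcoe, ← Function.iterate_mul] at hkz
  have hmnk : m * n * k ≠ 0 := Nat.mul_ne_zero hmn hk
  exact hray z hz hzray ⟨_, by omega, iterate_add_self_eq_of_reversible (f := f.toEquiv) hrev
    (hfix z hzray) (hfix _ hkz)⟩

end Reversible

section Reflection

lemma refl2_eq_self_iff {z : ℝ × ℝ} : refl2 z = z ↔ z.1 = 0 := by
  rw [refl2, Prod.ext_iff, and_iff_left rfl, neg_eq_self]

lemma involutive_refl2 : Function.Involutive refl2 := fun z => Prod.ext (neg_neg z.1) rfl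

lemma continuous_refl2 : Continuous refl2 := by
  unfold refl2
  fun_prop

/-- The complex chart of the plane whose real axis runs along the `y`-axis, scaled by `s`. -/
def verticalChart (s : ℝ) (hs : s ≠ 0) : ℂ ≃L[ℝ] ℝ × ℝ :=
  ((ContinuousLinearEquiv.smulLeft (Units.mk0 s hs)).trans Complex.equivRealProdCLM).trans
    (ContinuousLinearEquiv.prodComm ℝ ℝ ℝ)

lemma verticalChart_one {s : ℝ} (hs : s ≠ 0) : verticalChart s hs 1 = (0, s) := by
  simp [verticalChart]

variable {C : Set (ℝ × ℝ)} {f : C ≃ₜ C} {R : C → C}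

lemma exists_homeomorph_of_coe_eq_refl2 (hR : ∀ z, (R z : ℝ × ℝ) = refl2 z) :
    ∃ e : C ≃ₜ C, ⇑e = R := by
  have hinv : Function.Involutive R := fun z =>
    Subtype.ext (by rw [hR, hR, involutive_refl2])
  have hc : Continuous R := continuous_induced_rng.2 <| by
    simpa only [Function.comp_def, hR] using continuous_refl2.comp continuous_subtype_val
  exact ⟨⟨hinv.toPerm R, hc, hc⟩, rfl⟩

lemma apply_eq_self_iff_fst_eq_zero (hR : ∀ z, (R z : ℝ × ℝ) = refl2 z) {z : C} :
    R z = z ↔ (z : ℝ × ℝ).1 = 0 := by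
  rw [← Subtype.coe_inj, hR, refl2_eq_self_iff]

lemma mul_snd_lt_of_mem_periodicPts (hC : Convex ℝ C) (hR : ∀ z, (R z : ℝ × ℝ) = refl2 z)
    (hrev : Function.Semiconj R f.symm f) (hf : Nonwandering f) {s : ℝ} (hs : s ≠ 0) {p w : C}
    (hp : (p : ℝ × ℝ) ∈ interior C) (hp0 : R p = p) (hpf : p ∈ Function.periodicPts f)
    (hext : ∀ z : C, (z : ℝ × ℝ) ∈ interior C → R z = z → z ∈ Function.periodicPts f →
      s * (z : ℝ × ℝ).2 ≤ s * (p : ℝ × ℝ).2)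
    (hwf : w ∈ Function.periodicPts f) (hwp : w ≠ p) :
    s * (p : ℝ × ℝ).2 < s * (w : ℝ × ℝ).2 := by
  have hp1 := (apply_eq_self_iff_fst_eq_zero hR).1 hp0
  have hray : ∀ z ∈ polarRay (verticalChart s hs) p, z.1 = 0 ∧ s * (p : ℝ × ℝ).2 < s * z.2 := by
    rintro z ⟨t, ht, rfl⟩
    have hpos : 0 < t * s ^ 2 := by positivity
    simp only [verticalChart_one, Prod.fst_add, Prod.snd_add, Prod.smul_mk, smul_eq_mul, hp1]
    exact ⟨by ring, by linarith⟩
  obtain ⟨e, rfl⟩ := exists_homeomorph_of_coe_eq_refl2 hR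
  have hfix : ∀ z : C, (z : ℝ × ℝ) ∈ polarRay (verticalChart s hs) p → e z = z := fun z hz =>
    (apply_eq_self_iff_fst_eq_zero hR).2 (hray z hz).1
  exact (hray w (mem_polarRay_of_mem_periodicPts hC hp hf hrev hfix
    (fun z hz hzray hzf => (hext z hz (hfix z hzray) hzf).not_gt (hray z hzray).2)
    hpf hwf hwp)).2

lemma exists_interior_symmetric_mem_periodicPts (hC : Convex ℝ C) (hne : (interior C).Nonempty)
    (hR : ∀ z, (R z : ℝ × ℝ) = refl2 z) (hrev : Function.Semiconj R f.symm f)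
    (hf : Nonwandering f) :
    ∃ z : C, (z : ℝ × ℝ) ∈ interior C ∧ R z = z ∧ z ∈ Function.periodicPts f := by
  obtain ⟨e, rfl⟩ := exists_homeomorph_of_coe_eq_refl2 hR
  obtain ⟨z, hz, hz1, hfz1⟩ := exists_interior_axis_apply_axis
    (ψ := ContinuousLinearMap.fst ℝ ℝ ℝ) (verticalChart 1 one_ne_zero) hC hne hf hrev
    (fun z => Subtype.ext (by rw [hR, hR, involutive_refl2])) (fun z => by rw [hR]; rfl)
  have hez := (apply_eq_self_iff_fst_eq_zero hR).2 hz1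
  exact ⟨z, hz, hez, 1 + 1, two_pos, iterate_add_self_eq_of_reversible (f := f.toEquiv) hrev hez
    ((apply_eq_self_iff_fst_eq_zero hR).2 hfz1)⟩

theorem dichotomy_disk_general (hC : Convex ℝ C) (hne : (interior C).Nonempty)
    (hR : ∀ z, (R z : ℝ × ℝ) = refl2 z) (hrev : ∀ z, f (R z) = R (f.symm z))
    (hf : Nonwandering f) :
    (∃ z : C, Function.periodicPts f = {z} ∧ (z : ℝ × ℝ) ∈ interior C ∧ f z = z ∧ R z = z) ∨
    {z : C | (z : ℝ × ℝ) ∈ interior C ∧ (∃ k : ℕ, 1 ≤ k ∧ f^[k] z = z) ∧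
      ∃ l : ℕ, 1 ≤ l ∧ f^[l] z = R z}.Infinite := by
  rw [or_iff_not_imp_right, Set.not_infinite]
  intro hfin
  have hsemi : Function.Semiconj R f.symm f := fun z => (hrev z).symm
  let P : Set C := {z | (z : ℝ × ℝ) ∈ interior C ∧ R z = z ∧ z ∈ Function.periodicPts f}
  have hPfin : P.Finite := hfin.subset fun z ⟨hz, hRz, k, hk, hkz⟩ =>
    ⟨hz, ⟨k, hk, hkz⟩, k, hk, Eq.trans hkz hRz.symm⟩
  have hPne : P.Nonempty := exists_interior_symmetric_mem_periodicPts hC hne hR hsemi hf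
  obtain ⟨p, ⟨hp, hRp, hpf⟩, hmin⟩ := exists_min_image P (fun z => (z : ℝ × ℝ).2) hPfin hPne
  obtain ⟨q, ⟨hq, hRq, hqf⟩, hmax⟩ := exists_max_image P (fun z => (z : ℝ × ℝ).2) hPfin hPne
  have hbelow : ∀ w ∈ Function.periodicPts f, w ≠ p → (w : ℝ × ℝ).2 < (p : ℝ × ℝ).2 :=
    fun w hw hwp => by
      simpa using mul_snd_lt_of_mem_periodicPts hC hR hsemi hf (s := -1) (by norm_num) hp hRp hpf
        (fun z hz hRz hzf => by simpa using hmin z ⟨hz, hRz, hzf⟩) hw hwp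
  have habove : ∀ w ∈ Function.periodicPts f, w ≠ q → (q : ℝ × ℝ).2 < (w : ℝ × ℝ).2 :=
    fun w hw hwq => by
      simpa using mul_snd_lt_of_mem_periodicPts hC hR hsemi hf (s := 1) one_ne_zero hq hRq hqf
        (fun z hz hRz hzf => by simpa using hmax z ⟨hz, hRz, hzf⟩) hw hwq
  have hqp : q = p := by
    by_contra hqp
    exact (hbelow q hqf hqp).not_ge (hmin q ⟨hq, hRq, hqf⟩)
  have hunique : ∀ w ∈ Function.periodicPts f, w = p := fun w hw => by
    by_contra hwp
    exact lt_asymm (hbelow w hw hwp) (hqp ▸ habove w hw (hqp ▸ hwp))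
  exact ⟨p, eq_singleton_iff_unique_mem.2 ⟨hpf, hunique⟩, hp,
    hunique _ ((Function.bijOn_periodicPts f).mapsTo hpf), hRp⟩

end Reflection

section Disk

lemma enorm2_eq_norm (z : ℝ × ℝ) : enorm2 z = ‖Complex.equivRealProdCLM.symm z‖ := by
  rw [enorm2, Complex.norm_def, Complex.normSq_apply]
  simp [sq]

lemma disk_eq_preimage_closedBall :
    disk = Complex.equivRealProdCLM.symm ⁻¹' Metric.closedBall 0 1 := by
  ext z
  simp [disk, enorm2_eq_norm]

lemma interior_disk : interior disk = diskInt := by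
  rw [disk_eq_preimage_closedBall]
  refine ((Complex.equivRealProdCLM.symm.toHomeomorph.preimage_interior _).symm).trans ?_
  rw [interior_closedBall _ one_ne_zero]
  ext z
  simp [diskInt, enorm2_eq_norm]

lemma convex_disk : Convex ℝ disk := by
  rw [disk_eq_preimage_closedBall]
  exact (convex_closedBall _ _).linear_preimage Complex.equivRealProdCLM.symm.toLinearMap

lemma isCompact_disk : IsCompact disk := by
  rw [disk_eq_preimage_closedBall]
  exact Complex.equivRealProdCLM.symm.toHomeomorph.isCompact_preimage.2 (isCompact_closedBall _ _)

lemma interior_disk_nonempty : (interior disk).Nonempty := by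
  rw [interior_disk]
  exact ⟨0, by simp [diskInt, enorm2]⟩

lemma isOpenPosMeasure_comap_subtype_val {V : Type*} [NormedAddCommGroup V] [NormedSpace ℝ V]
    [MeasurableSpace V] {C : Set V} (hC : Convex ℝ C) (hne : (interior C).Nonempty)
    (hCm : MeasurableSet C) (μ : Measure V) [μ.IsOpenPosMeasure] :
    (μ.comap (Subtype.val : C → V)).IsOpenPosMeasure := by
  refine ⟨fun U hU hUne => ?_⟩
  obtain ⟨z, hzU, hz⟩ := (dense_interior_subtype hC hne).inter_open_nonempty U hU hUne
  rw [comap_subtype_coe_apply hCm]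
  refine (Measure.measure_pos_of_mem_nhds μ (x := (z : V)) ?_).ne'
  rw [← map_nhds_subtype_coe_eq_nhds z.2 (mem_interior_iff_mem_nhds.1 hz)]
  exact image_mem_map (hU.mem_nhds hzU)

lemma nonwandering_of_measurePreserving {V : Type*} [NormedAddCommGroup V] [NormedSpace ℝ V]
    [MeasurableSpace V] [OpensMeasurableSpace V] {C : Set V} (hC : Convex ℝ C)
    (hne : (interior C).Nonempty) (hCc : IsCompact C) {μ : Measure V} [μ.IsOpenPosMeasure]
    [IsFiniteMeasureOnCompacts μ] {f : C → C}
    (hf : MeasurePreserving f (μ.comap (Subtype.val : C → V)) (μ.comap (Subtype.val : C → V))) :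
    Nonwandering f := by
  have := isOpenPosMeasure_comap_subtype_val hC hne hCc.measurableSet μ
  have : IsFiniteMeasure (μ.comap (Subtype.val : C → V)) := by
    refine ⟨?_⟩
    rw [comap_subtype_coe_apply hCc.measurableSet, Subtype.coe_image_univ]
    exact hCc.measure_lt_top
  exact nonwandering_of_conservative hf.conservative

end Disk

/-- **Corollary 1.2.** Every area preserving reversible homeomorphism of the closed
disk has either precisely one interior symmetric fixed point with no other periodic
points, or infinitely many interior symmetric periodic points. -/
theorem dichotomy_disk
    (f : disk ≃ₜ disk)
    (hrev : ∀ z : disk, f (ID z) = ID (f.symm z))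
    (harea : MeasurePreserving f
      ((volume : Measure (ℝ × ℝ)).comap (Subtype.val : disk → ℝ × ℝ))
      ((volume : Measure (ℝ × ℝ)).comap (Subtype.val : disk → ℝ × ℝ))) :
    (∃ z : disk,
        {w : disk | ∃ k : ℕ, 1 ≤ k ∧ (⇑f)^[k] w = w} = {z} ∧
        (z : ℝ × ℝ) ∈ diskInt ∧ f z = z ∧ ID z = z) ∨
    {z : disk | (z : ℝ × ℝ) ∈ diskInt ∧
        (∃ k : ℕ, 1 ≤ k ∧ (⇑f)^[k] z = z) ∧
        (∃ l : ℕ, 1 ≤ l ∧ (⇑f)^[l] z = ID z)}.Infinite := by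
  rw [← interior_disk]
  exact dichotomy_disk_general convex_disk interior_disk_nonempty (fun _ => rfl) hrev
    (nonwandering_of_measurePreserving convex_disk interior_disk_nonempty isCompact_disk harea)
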